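/- Under the hypotheses of the previous abstraction (metric space H, nonempty S ⊆ H with φ|_S = 0 and d(x,S) ≤ Kφ(x), ψ uniformly continuous in the first argument with modulus α), the supremum version holds: sup_{x ∈ S} ψ(x, y) = sup_{x ∈ H} ( ψ(x, y) - α(K·φ(x)) )⁺ whenever ψ ≥ 0, where t⁺ = max(t, 0), i.e. sup_{x ∈ S} ψ(x,y) = sup_{x ∈ H} max(ψ(x,y) - α(Kφ(x)), 0), provided sup_{x∈S} ψ(x,y) ≥ 0. -/

import Mathlib

/-
A right-continuous monotone modulus commutes with the infimum defining `infDist x S`, so the bounds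
`f x - α (dist x s) ≤ f s` for `s ∈ S` combine to `f x - α (infDist x S) ≤ sup_S f`. Replacing
`infDist` by a larger gauge that vanishes on `S` only lowers the left-hand side, and on `S` itself
nothing is subtracted. Hence `f - α ∘ g` on the whole space and `f` on `S` have the same upper
bounds; taking positive parts commutes with suprema.
-/

open Metric Set

section Modulus

variable {H : Type*} [PseudoMetricSpace H] {S : Set H} {α : ℝ → ℝ} {f g : H → ℝ}

theorem modulus_infDist_eq_sInf (hS : S.Nonempty) (hαm : MonotoneOn α (Ici 0)) {x : H}
    (hαc : ContinuousWithinAt α (Ici (infDist x S)) (infDist x S)) :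
    α (infDist x S) = sInf (α '' (dist x '' S)) := by
  have hinf : infDist x S = sInf (dist x '' S) := by rw [infDist_eq_iInf, sInf_image']
  have hnonneg : dist x '' S ⊆ Ici 0 := image_subset_iff.2 fun _ _ => dist_nonneg
  have hright : dist x '' S ⊆ Ici (infDist x S) :=
    image_subset_iff.2 fun _ hs => infDist_le_dist_of_mem hs
  have hcont : ContinuousWithinAt α (dist x '' S) (sInf (dist x '' S)) :=
    hinf ▸ hαc.mono hright
  rw [hinf]
  exact (hαm.mono hnonneg).map_csInf_of_continuousWithinAt hcont (hS.image _) ⟨_, hright⟩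

theorem sub_modulus_infDist_le (hS : S.Nonempty) (hαm : MonotoneOn α (Ici 0)) {x : H}
    (hαc : ContinuousWithinAt α (Ici (infDist x S)) (infDist x S))
    (hmod : ∀ s ∈ S, f x - f s ≤ α (dist x s)) {B : ℝ} (hB : B ∈ upperBounds (f '' S)) :
    f x - α (infDist x S) ≤ B := by
  rw [modulus_infDist_eq_sInf hS hαm hαc, sub_le_comm]
  refine le_csInf ((hS.image _).image _) (forall_mem_image.2 (forall_mem_image.2 fun s hs => ?_))
  calc
    f x - B ≤ f x - f s := sub_le_sub_left (hB (mem_image_of_mem f hs)) _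
    _ ≤ α (dist x s) := hmod s hs

theorem upperBounds_range_sub_modulus (hS : S.Nonempty) (hgS : ∀ s ∈ S, g s = 0)
    (hg : ∀ x, infDist x S ≤ g x) (hαm : MonotoneOn α (Ici 0))
    (hαc : ∀ t, 0 ≤ t → ContinuousWithinAt α (Ici t) t) (hα0 : α 0 = 0)
    (hmod : ∀ x, ∀ s ∈ S, f x - f s ≤ α (dist x s)) :
    upperBounds (range fun x => f x - α (g x)) = upperBounds (f '' S) := by
  refine Subset.antisymm (upperBounds_mono_set ?_) fun B hB => forall_mem_range.2 fun x => ?_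
  · rintro _ ⟨s, hs, rfl⟩
    exact ⟨s, by simp only [hgS s hs, hα0, sub_zero]⟩
  · have hα : α (infDist x S) ≤ α (g x) :=
      hαm infDist_nonneg (infDist_nonneg.trans (hg x)) (hg x)
    exact (sub_le_sub_left hα _).trans
      (sub_modulus_infDist_le hS hαm (hαc _ infDist_nonneg) (hmod x) hB)

theorem isLUB_range_sub_modulus (hS : S.Nonempty) (hgS : ∀ s ∈ S, g s = 0)
    (hg : ∀ x, infDist x S ≤ g x) (hαm : MonotoneOn α (Ici 0))
    (hαc : ∀ t, 0 ≤ t → ContinuousWithinAt α (Ici t) t) (hα0 : α 0 = 0)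
    (hmod : ∀ x, ∀ s ∈ S, f x - f s ≤ α (dist x s)) (hbdd : BddAbove (f '' S)) :
    IsLUB (range fun x => f x - α (g x)) (⨆ s : S, f s) := by
  rw [isLUB_congr (upperBounds_range_sub_modulus hS hgS hg hαm hαc hα0 hmod), ← sSup_image']
  exact isLUB_csSup (hS.image f) hbdd

theorem stmt9_general (hS : S.Nonempty) (hgS : ∀ s ∈ S, g s = 0)
    (hg : ∀ x, infDist x S ≤ g x) (hαm : MonotoneOn α (Ici 0))
    (hαc : ∀ t, 0 ≤ t → ContinuousWithinAt α (Ici t) t) (hα0 : α 0 = 0)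
    (hmod : ∀ x, ∀ s ∈ S, f x - f s ≤ α (dist x s)) (hbdd : BddAbove (f '' S)) :
    max (⨆ s : S, f s) 0 = ⨆ x, max (f x - α (g x)) 0 := by
  have : Nonempty H := hS.nonempty
  have hlub := isLUB_range_sub_modulus hS hgS hg hαm hαc hα0 hmod hbdd
  have hconst : BddAbove (range fun _ : H => (0 : ℝ)) := ⟨0, forall_mem_range.2 fun _ => le_rfl⟩
  rw [ciSup_sup_eq hlub.bddAbove hconst, ciSup_const, hlub.ciSup_eq]

end Modulus

/-- Quantification Lemma, supremum form: under the same hypotheses as the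
infimum version, with `ψ` nonnegative and bounded,
`sup_{x ∈ S} ψ(x, y) = sup_{x ∈ H} max (ψ(x, y) - α (K φ(x))) 0`. -/
theorem stmt9 {H : Type*} [MetricSpace H] {k : ℕ}
    (S : Set H) (hS : S.Nonempty) (K : ℝ) (φ : H → ℝ)
    (hφ0 : ∀ x, 0 ≤ φ x) (hφS : ∀ x ∈ S, φ x = 0)
    (hd : ∀ x, Metric.infDist x S ≤ K * φ x)
    (α : ℝ → ℝ) (hαc : Continuous α) (hαm : Monotone α) (hα0 : α 0 = 0)
    (ψ : H → (Fin k → H) → ℝ)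
    (hmod : ∀ x x' y, |ψ x y - ψ x' y| ≤ α (dist x x'))
    (hpos : ∀ x y, 0 ≤ ψ x y) (hbdd : ∃ B, ∀ x y, ψ x y ≤ B)
    (y : Fin k → H) :
    (⨆ x : S, ψ x y) = ⨆ x : H, max (ψ x y - α (K * φ x)) 0 := by
  rw [← max_eq_left (Real.iSup_nonneg fun s : S => hpos s y)]
  exact stmt9_general (f := fun x => ψ x y) hS (fun s hs => by rw [hφS s hs, mul_zero]) hd
    (hαm.monotoneOn _) (fun _ _ => hαc.continuousWithinAt) hα0
    (fun x s _ => (le_abs_self _).trans (hmod x s y))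
    (hbdd.imp fun _ hB => forall_mem_image.2 fun x _ => hB x y)
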